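/- Let p be a prime, R a nontrivial commutative ring and q ∈ R with (p)_q = 0 and R q-divisible, and let ∂_σ : R[x] → R[x] be the R-linear map with ∂_σ(x^n) = (n)_q·x^{n−1}. Then: (a) the kernel of ∂_σ is exactly the subring R[x^p]; (b) R[x] is the direct sum, as an R-module, of the image ∂_σ(R[x]) and of the free R-submodule with basis {x^{pk+p−1} : k ≥ 0}; equivalently, the classes of the monomials x^{pk+p−1} (k ≥ 0) form an R-basis of coker(∂_σ). (q-deformed Cartier isomorphism for the q-de Rham complex of R[x]: H^0 ≅ R[x^p] and H^1 ≅ Ω^1 of R[x^p].) -/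

import Mathlib

/-- The `q`-integer `(n)_q = 1 + q + ⋯ + q^{n-1}`. -/
def qInt {S : Type*} [CommRing S] (q : S) (n : ℕ) : S :=
  ∑ i ∈ Finset.range n, q ^ i

/-!
In the monomial basis `∂_σ` is a weighted shift: the coefficient of `x^m` in `∂_σ f` is `(m + 1)_q`
times that of `x^{m+1}` in `f`. If every weight `(n)_q` is either zero or a unit, then the kernel
is spanned by the `x^n` with `(n)_q = 0` and the image by the `x^m` with `(m + 1)_q` a unit, so the
remaining `x^m` span a complement of the image.

The weights are controlled by `(a + b)_q = (a)_q + q^a (b)_q`. Since `(p)_q = 0` forces `q^p = 1`,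
`(n)_q` depends only on `n` modulo `p`, so it suffices that `(m)_q` be a unit for `0 < m < p`. The
Euclidean algorithm turns `(m)_q = (p)_q = 0` into `(gcd(m, p))_q = 0`; for `p` prime this would
give `1 = (1)_q = 0`, so such `(m)_q` are nonzero, hence units by `q`-divisibility.
-/

open Polynomial

section QInt

variable {R : Type*} [CommRing R] {q : R} {m n p : ℕ}

lemma qInt_zero : qInt q 0 = 0 := Finset.sum_range_zero _

lemma qInt_one : qInt q 1 = 1 := by simp [qInt]

lemma qInt_add (m n : ℕ) : qInt q (m + n) = qInt q m + q ^ m * qInt q n := by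
  simp only [qInt, Finset.sum_range_add, Finset.mul_sum, pow_add]

lemma pow_eq_one_of_qInt_eq_zero (hp : qInt q p = 0) : q ^ p = 1 := by
  have h : qInt q p * (q - 1) = q ^ p - 1 := geom_sum_mul q p
  rwa [hp, zero_mul, eq_comm, sub_eq_zero] at h

lemma qInt_mod (hp : qInt q p = 0) (n : ℕ) : qInt q (n % p) = qInt q n := by
  have periodic : Function.Periodic (qInt q) p := fun n => by
    rw [add_comm, qInt_add, hp, pow_eq_one_of_qInt_eq_zero hp, zero_add, one_mul]
  exact periodic.map_mod_nat n

lemma qInt_eq_zero_of_dvd (hp : qInt q p = 0) (h : p ∣ n) : qInt q n = 0 := by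
  rw [← qInt_mod hp, Nat.mod_eq_zero_of_dvd h, qInt_zero]

lemma isUnit_qInt_of_not_dvd (hp : qInt q p = 0) (hp_pos : 0 < p)
    (hunit : ∀ m, 0 < m → m < p → IsUnit (qInt q m)) (h : ¬ p ∣ n) : IsUnit (qInt q n) := by
  rw [← qInt_mod hp]
  exact hunit _ (Nat.emod_pos_of_not_dvd h) (Nat.mod_lt n hp_pos)

lemma qInt_gcd_eq_zero (hm : qInt q m = 0) (hn : qInt q n = 0) : qInt q (m.gcd n) = 0 := by
  induction m, n using Nat.gcd.induction with
  | H0 n => rwa [Nat.gcd_zero_left]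
  | H1 m n _ ih =>
    rw [Nat.gcd_rec]
    exact ih (by rwa [qInt_mod hm]) hm

lemma qInt_ne_zero_of_coprime [Nontrivial R] (hp : qInt q p = 0) (h : p.Coprime m) :
    qInt q m ≠ 0 := fun hm =>
  one_ne_zero <| calc
    (1 : R) = qInt q (p.gcd m) := by rw [h.gcd_eq_one, qInt_one]
    _ = 0 := qInt_gcd_eq_zero hp hm

end QInt

section MonomialSpan

variable {R : Type*} [Semiring R] {s : Set ℕ} {f : R[X]}

lemma coe_basisMonomials_eq_X_pow : ⇑(basisMonomials R) = fun n => (X : R[X]) ^ n := by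
  simp only [coe_basisMonomials, X_pow_eq_monomial]

variable (R) in
lemma linearIndependent_X_pow : LinearIndependent R fun n : ℕ => (X : R[X]) ^ n :=
  coe_basisMonomials_eq_X_pow (R := R) ▸ (basisMonomials R).linearIndependent

variable (R) in
lemma span_range_X_pow : Submodule.span R (Set.range fun n : ℕ => (X : R[X]) ^ n) = ⊤ :=
  coe_basisMonomials_eq_X_pow (R := R) ▸ (basisMonomials R).span_eq

variable (R) in
/-- The submodule of `R[X]` spanned by the monomials with exponent in `s`. Kernel and image of the
`q`-derivation, the subring `R[x^p]` and the complement of the image are all of this form. -/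
noncomputable def monomialSpan (s : Set ℕ) : Submodule R R[X] :=
  Submodule.span R ((X ^ ·) '' s)

lemma mem_monomialSpan_iff : f ∈ monomialSpan R s ↔ ∀ n ∉ s, f.coeff n = 0 := by
  have h := (basisMonomials R).mem_span_image (m := f) (s := s)
  rw [coe_basisMonomials_eq_X_pow] at h
  refine h.trans <| forall_congr' fun n => ?_
  rw [Finset.mem_coe, Finsupp.mem_support_iff, ne_eq, not_imp_comm]
  rfl

variable (R) in
lemma isCompl_monomialSpan {t : Set ℕ} (h : IsCompl s t) :
    IsCompl (monomialSpan R s) (monomialSpan R t) :=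
  (linearIndependent_X_pow R).isCompl_span_image (span_range_X_pow R) h

end MonomialSpan

lemma toSubmodule_adjoin_X_pow (R : Type*) [CommSemiring R] (p : ℕ) :
    Subalgebra.toSubmodule (Algebra.adjoin R {(X : R[X]) ^ p}) = monomialSpan R {n | p ∣ n} := by
  rw [Algebra.adjoin_eq_span, monomialSpan]
  congr 1
  ext f
  simp only [SetLike.mem_coe, Submonoid.mem_closure_singleton, Set.mem_image, Set.mem_ofPred_eq,
    dvd_iff_exists_eq_mul_right, ← pow_mul]
  grind

section WeightedShift

variable {R : Type*} [Semiring R] {c : ℕ → R} {D : R[X] →ₗ[R] R[X]} {s : Set ℕ}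

/-- `D` is the weighted shift `x^n ↦ c n · x^(n-1)` on `R[X]`; the `q`-derivation is the case
`c n = (n)_q`. At `n = 0` truncated subtraction makes this `D 1 = c 0`, so `D` lowers degrees only
if `c 0 = 0`. -/
def IsWeightedShift (c : ℕ → R) (D : R[X] →ₗ[R] R[X]) : Prop :=
  ∀ n, D (X ^ n) = c n • X ^ (n - 1)

namespace IsWeightedShift

lemma coeff_apply (hD : IsWeightedShift c D) (hc : c 0 = 0)
    (f : R[X]) (m : ℕ) : (D f).coeff m = f.coeff (m + 1) * c (m + 1) := by
  induction f using Polynomial.induction_on' with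
  | add f g hf hg => simp only [map_add, coeff_add, hf, hg, add_mul]
  | monomial n a =>
    rw [← C_mul_X_pow_eq_monomial, ← smul_eq_C_mul, map_smul, hD n]
    cases n with
    | zero => simp [hc, coeff_one]
    | succ n => by_cases h : m = n <;> simp [coeff_X_pow, h]

lemma ker_eq_monomialSpan (hD : IsWeightedShift c D) (h0 : 0 ∈ s)
    (hzero : ∀ n ∈ s, c n = 0) (hunit : ∀ n ∉ s, IsUnit (c n)) :
    LinearMap.ker D = monomialSpan R s := by
  ext f
  rw [LinearMap.mem_ker, mem_monomialSpan_iff, Polynomial.ext_iff]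
  simp only [hD.coeff_apply (hzero 0 h0), coeff_zero]
  constructor
  · intro h n hn
    obtain ⟨m, rfl⟩ := Nat.exists_eq_succ_of_ne_zero (ne_of_mem_of_not_mem h0 hn).symm
    exact (hunit _ hn).mul_left_eq_zero.1 (h m)
  · intro h m
    by_cases hm : m + 1 ∈ s
    · rw [hzero _ hm, mul_zero]
    · rw [h _ hm, zero_mul]

lemma range_eq_monomialSpan (hD : IsWeightedShift c D) (h0 : 0 ∈ s)
    (hzero : ∀ n ∈ s, c n = 0) (hunit : ∀ n ∉ s, IsUnit (c n)) :
    LinearMap.range D = monomialSpan R {m | m + 1 ∉ s} := by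
  apply le_antisymm
  · rintro _ ⟨f, rfl⟩
    refine mem_monomialSpan_iff.2 fun m hm => ?_
    rw [hD.coeff_apply (hzero 0 h0), hzero _ (not_not.1 hm), mul_zero]
  · refine Submodule.span_le.2 ?_
    rintro _ ⟨m, hm, rfl⟩
    exact (Submodule.smul_mem_iff_of_isUnit _ (hunit _ hm)).1 ⟨X ^ (m + 1), hD (m + 1)⟩

end IsWeightedShift

end WeightedShift

section CartierExponents

variable {p : ℕ}

lemma mul_add_sub_one_add_one (hp : 0 < p) (k : ℕ) : p * k + p - 1 + 1 = p * (k + 1) := by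
  rw [Nat.sub_add_cancel (by lia), mul_add_one]

lemma injective_mul_add_sub_one (hp : 0 < p) : Function.Injective fun k => p * k + p - 1 := by
  intro j k (h : p * j + p - 1 = p * k + p - 1)
  have h' : p * (j + 1) = p * (k + 1) := by
    rw [← mul_add_sub_one_add_one hp, h, mul_add_sub_one_add_one hp]
  exact Nat.succ_injective (Nat.eq_of_mul_eq_mul_left hp h')

lemma range_mul_add_sub_one (hp : 0 < p) :
    (Set.range fun k => p * k + p - 1) = {m | p ∣ m + 1} := by
  ext m
  constructor
  · rintro ⟨k, rfl⟩
    exact ⟨k + 1, mul_add_sub_one_add_one hp k⟩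
  · rintro ⟨k, hk⟩
    obtain ⟨j, rfl⟩ := Nat.exists_eq_succ_of_ne_zero (by rintro rfl; lia : k ≠ 0)
    exact ⟨j, Nat.succ_injective ((mul_add_sub_one_add_one hp j).trans hk.symm)⟩

end CartierExponents

/-- `p` is the `q`-characteristic of `R`: for `q` a primitive root of unity in a field, any order
`p ≥ 2` occurs. -/
theorem q_cartier_isomorphism_general
    {p : ℕ} (hp : 0 < p) {R : Type*} [CommRing R] {q : R} (hpq : qInt q p = 0)
    (hunit : ∀ m, 0 < m → m < p → IsUnit (qInt q m))
    (D : R[X] →ₗ[R] R[X]) (hD : ∀ n : ℕ, D (X ^ n) = qInt q n • X ^ (n - 1)) :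
    (∀ f : R[X], D f = 0 ↔ f ∈ Algebra.adjoin R {(X : R[X]) ^ p}) ∧
    LinearIndependent R (fun k : ℕ => (X : R[X]) ^ (p * k + p - 1)) ∧
    IsCompl (LinearMap.range D)
      (Submodule.span R (Set.range fun k : ℕ => (X : R[X]) ^ (p * k + p - 1))) := by
  have hshift : IsWeightedShift (qInt q) D := hD
  have h0 : 0 ∈ {n | p ∣ n} := dvd_zero p
  have qInt_zero_of_dvd : ∀ n ∈ {n | p ∣ n}, qInt q n = 0 := fun _ => qInt_eq_zero_of_dvd hpq
  have qInt_unit_of_not_dvd : ∀ n ∉ {n | p ∣ n}, IsUnit (qInt q n) :=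
    fun _ => isUnit_qInt_of_not_dvd hpq hp hunit
  have hker := hshift.ker_eq_monomialSpan h0 qInt_zero_of_dvd qInt_unit_of_not_dvd
  have hrange := hshift.range_eq_monomialSpan h0 qInt_zero_of_dvd qInt_unit_of_not_dvd
  have hspan : Submodule.span R (Set.range fun k : ℕ => (X : R[X]) ^ (p * k + p - 1)) =
      monomialSpan R {m | p ∣ m + 1} := by
    rw [monomialSpan, ← range_mul_add_sub_one hp, ← Set.range_comp]
    rfl
  refine ⟨fun f => ?_, (linearIndependent_X_pow R).comp _ (injective_mul_add_sub_one hp), ?_⟩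
  · rw [← LinearMap.mem_ker, hker, ← toSubmodule_adjoin_X_pow, Subalgebra.mem_toSubmodule]
  · rw [hrange, hspan]
    exact isCompl_monomialSpan R isCompl_compl.symm

/-- `q`-deformed Cartier isomorphism for the `q`-de Rham complex of
`R[x]`: let `p` be a prime, `R` a nontrivial commutative ring, `q ∈ R` with `(p)_q = 0`
and `R` `q`-divisible, and `∂_σ : R[x] → R[x]` the `R`-linear map with
`∂_σ(x^n) = (n)_q·x^{n−1}`.  Then:
(a) `ker ∂_σ` is exactly the subring `R[x^p]`;
(b) `R[x]` is the direct sum, as an `R`-module, of `im ∂_σ` and of the free `R`-submodule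
with basis `{x^{pk+p−1} : k ≥ 0}`. -/
theorem q_cartier_isomorphism
    (p : ℕ) (hp : p.Prime)
    (R : Type*) [CommRing R] [Nontrivial R] (q : R)
    (hpq : qInt q p = 0)
    (hdiv : ∀ m : ℕ, 1 ≤ m → qInt q m ≠ 0 → IsUnit (qInt q m))
    (D : Polynomial R →ₗ[R] Polynomial R)
    (hD : ∀ n : ℕ, D (Polynomial.X ^ n) = qInt q n • Polynomial.X ^ (n - 1)) :
    -- (a) the kernel of `∂_σ` is `R[x^p]`
    (∀ f : Polynomial R, D f = 0 ↔
      f ∈ Algebra.adjoin R {(Polynomial.X : Polynomial R) ^ p}) ∧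
    -- (b) the monomials `x^{pk+p−1}` are linearly independent over `R` and span a
    -- complement of the image of `∂_σ`
    LinearIndependent R (fun k : ℕ => (Polynomial.X : Polynomial R) ^ (p * k + p - 1)) ∧
    IsCompl (LinearMap.range D)
      (Submodule.span R
        (Set.range fun k : ℕ => (Polynomial.X : Polynomial R) ^ (p * k + p - 1))) := by
  exact q_cartier_isomorphism_general hp.pos hpq (fun m hm hmp => hdiv m hm <|
    qInt_ne_zero_of_coprime hpq (Nat.coprime_of_lt_prime hm.ne' hmp hp)) D hD
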